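/- arXiv:2210.00040 — 2 statements merged into one kernel-verified Lean document; each statement's English description precedes it below -/
import Mathlib

section
/- Let d ≥ 1, W ∈ ℝ^{d×d} symmetric positive definite, A_c, Ñ ∈ ℝ^{d×d}, and H̃ ∈ ℝ^{1×d}. Assume that for every q ∈ ℝ^d with qᵀ W⁻¹ q ≤ 1, the symmetric matrix A_cᵀ W⁻¹ + W⁻¹ A_c + H̃ᵀ (Ñ q)ᵀ W⁻¹ + W⁻¹ (Ñ q) H̃ is negative definite. Then for every differentiable curve p : [0,∞) → ℝ^d satisfying p'(t) = A_c p(t) + (H̃ p(t))·(Ñ p(t)) for all t ≥ 0 and p(0)ᵀ W⁻¹ p(0) ≤ 1, it holds that p(t)ᵀ W⁻¹ p(t) ≤ 1 for all t ≥ 0 (the ellipsoid is forward invariant) and p(t) → 0 as t → ∞. -/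
open Matrix

/-!
Let `V q = qᵀ W⁻¹ q` and let `M(q)` be the state-dependent matrix. Then `M(q) = Bᵀ W⁻¹ + W⁻¹ B`
for the rank-one perturbation `B = A_c + (Ñ q) H̃` of `A_c`, and `B q` is the vector field at `q`,
so the derivative of `V` along a solution `p` is `pᵀ M(p) p`. Hence `V` strictly decreases on
the ellipsoid away from the origin. No level `r ∈ (0, 1]` of `V` can be crossed upwards, which gives
forward invariance; on the compact shell `r ≤ V ≤ 1` the derivative is bounded away from zero, so
the solution leaves the shell in finite time, and `V (p t) → 0`. Compactness of the ellipsoid turns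
this into `p t → 0`.
-/

open Set Filter Topology

section RealFunctions

variable {g g' : ℝ → ℝ} {a r : ℝ}

theorem le_of_hasDerivWithinAt_neg_of_eq
    (hg : ∀ t, a ≤ t → HasDerivWithinAt g (g' t) (Ici a) t) (ha : g a ≤ r)
    (hneg : ∀ t, a ≤ t → g t = r → g' t < 0) {t : ℝ} (ht : a ≤ t) : g t ≤ r :=
  image_le_of_deriv_right_lt_deriv_boundary (b := t) (B := fun _ ↦ r)
    (fun s hs ↦ ((hg s hs.1).continuousWithinAt).mono Icc_subset_Ici_self)
    (fun s hs ↦ (hg s hs.1).mono (Ici_subset_Ici.2 hs.1)) ha (fun s ↦ hasDerivAt_const s r)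
    (fun s hs ↦ hneg s hs.1) (right_mem_Icc.2 ht)

theorem exists_lt_of_hasDerivWithinAt_le_neg {δ : ℝ} (hδ : 0 < δ)
    (hg : ∀ t, a ≤ t → HasDerivWithinAt g (g' t) (Ici a) t)
    (hdecay : ∀ t, a ≤ t → r ≤ g t → g' t ≤ -δ) : ∃ t, a ≤ t ∧ g t < r := by
  by_contra! hge
  have linear_bound (t : ℝ) (ht : a ≤ t) : g t ≤ g a - δ * (t - a) := by
    have hB (s : ℝ) : HasDerivAt (fun s ↦ g a - δ * (s - a)) (-δ) s := by
      simpa using (((hasDerivAt_id s).sub_const a).const_mul δ).const_sub (g a)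
    exact image_le_of_deriv_right_le_deriv_boundary (b := t)
      (fun s hs ↦ ((hg s hs.1).continuousWithinAt).mono Icc_subset_Ici_self)
      (fun s hs ↦ (hg s hs.1).mono (Ici_subset_Ici.2 hs.1)) (by simp)
      (fun s _ ↦ (hB s).continuousAt.continuousWithinAt) (fun s _ ↦ (hB s).hasDerivWithinAt)
      (fun s hs ↦ hdecay s hs.1 (hge s hs.1)) (right_mem_Icc.2 ht)
  have hstep : 0 ≤ (g a - r) / δ := div_nonneg (sub_nonneg.2 (hge a le_rfl)) hδ.le
  have hlate : a ≤ a + ((g a - r) / δ + 1) := by linarith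
  have hvalue : g a - δ * (a + ((g a - r) / δ + 1) - a) = r - δ := by
    field_simp
    ring
  linarith [linear_bound _ hlate, hge _ hlate]

end RealFunctions

section Lyapunov

variable {X : Type*} [TopologicalSpace X]

theorem tendsto_nhds_of_tendsto_of_isCompact_sublevel {ι : Type*} {l : Filter ι} {V : X → ℝ}
    {x₀ : X} {c : ℝ} {u : ι → X} (hK : IsCompact {x | V x ≤ c})
    (hV : ContinuousOn V {x | V x ≤ c}) (hmin : ∀ x, V x ≤ c → x ≠ x₀ → V x₀ < V x)
    (hu : ∀ᶠ i in l, V (u i) ≤ c) (hlim : Tendsto (fun i ↦ V (u i)) l (𝓝 (V x₀))) :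
    Tendsto u l (𝓝 x₀) := by
  refine tendsto_nhds.2 fun U hU hx₀ ↦ ?_
  obtain ⟨r, hr, hrV⟩ := (hK.diff hU).exists_forall_le' (hV.mono sdiff_subset)
    fun x hx ↦ hmin x hx.1 (ne_of_mem_of_not_mem hx₀ hx.2).symm
  filter_upwards [hu, hlim.eventually_lt_const hr] with i hic hir
  by_contra hiU
  exact (hrV (u i) ⟨hic, hiU⟩).not_gt hir

/-- `V` is a strict Lyapunov function for the point `x₀` on the compact sublevel set `{V ≤ c}`.
The dynamics enter only through `V'`, the derivative of `V` along trajectories as a function of the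
state, so that `X` need not carry a differentiable structure. -/
structure IsStrictLyapunovOn (V V' : X → ℝ) (x₀ : X) (c : ℝ) : Prop where
  continuous : Continuous V
  continuousOn_deriv : ContinuousOn V' {x | V x ≤ c}
  isCompact_sublevel : IsCompact {x | V x ≤ c}
  lt_level : V x₀ < c
  lt_of_ne : ∀ x, V x ≤ c → x ≠ x₀ → V x₀ < V x
  deriv_neg : ∀ x, V x ≤ c → x ≠ x₀ → V' x < 0

namespace IsStrictLyapunovOn

variable {V V' : X → ℝ} {x₀ : X} {c : ℝ} {p : ℝ → X} {a : ℝ}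

theorem apply_le_apply (h : IsStrictLyapunovOn V V' x₀ c) (x : X) : V x₀ ≤ V x := by
  by_contra! hx
  exact (h.lt_of_ne x (hx.trans h.lt_level).le (ne_of_apply_ne V hx.ne)).not_gt hx

theorem exists_pos_forall_deriv_le_neg (h : IsStrictLyapunovOn V V' x₀ c) {r : ℝ}
    (hr : V x₀ < r) : ∃ δ > 0, ∀ x, r ≤ V x → V x ≤ c → V' x ≤ -δ := by
  have hshell : IsCompact ({x | V x ≤ c} ∩ {x | r ≤ V x}) :=
    h.isCompact_sublevel.inter_right (isClosed_le continuous_const h.continuous)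
  obtain ⟨δ, hδ, hδV⟩ := hshell.exists_forall_le' (a := 0)
    (h.continuousOn_deriv.neg.mono inter_subset_left)
    fun x hx ↦ neg_pos.2 (h.deriv_neg x hx.1 (ne_of_apply_ne V (hr.trans_le hx.2).ne'))
  exact ⟨δ, hδ, fun x hrx hxc ↦ le_neg.2 (hδV x ⟨hxc, hrx⟩)⟩

theorem sublevel_forward_invariant (h : IsStrictLyapunovOn V V' x₀ c)
    (hp : ∀ t, a ≤ t → HasDerivWithinAt (fun s ↦ V (p s)) (V' (p t)) (Ici a) t)
    {r : ℝ} (hr : V x₀ < r) (hrc : r ≤ c) (ha : V (p a) ≤ r) {t : ℝ} (ht : a ≤ t) :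
    V (p t) ≤ r :=
  le_of_hasDerivWithinAt_neg_of_eq hp ha
    (fun s _ hs ↦ h.deriv_neg (p s) (hs.trans_le hrc) (ne_of_apply_ne V (hs.trans_gt hr).ne')) ht

theorem eventually_apply_le (h : IsStrictLyapunovOn V V' x₀ c)
    (hp : ∀ t, a ≤ t → HasDerivWithinAt (fun s ↦ V (p s)) (V' (p t)) (Ici a) t)
    (ha : V (p a) ≤ c) {r : ℝ} (hr : V x₀ < r) (hrc : r ≤ c) :
    ∀ᶠ t in atTop, V (p t) ≤ r := by
  obtain ⟨δ, hδ, hdecay⟩ := h.exists_pos_forall_deriv_le_neg hr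
  obtain ⟨τ, hτ, hτr⟩ := exists_lt_of_hasDerivWithinAt_le_neg hδ hp fun t ht hrt ↦
    hdecay (p t) hrt (h.sublevel_forward_invariant hp h.lt_level le_rfl ha ht)
  filter_upwards [eventually_ge_atTop τ] with t ht
  exact h.sublevel_forward_invariant
    (fun s hs ↦ (hp s (hτ.trans hs)).mono (Ici_subset_Ici.2 hτ)) hr hrc hτr.le ht

theorem tendsto_apply (h : IsStrictLyapunovOn V V' x₀ c)
    (hp : ∀ t, a ≤ t → HasDerivWithinAt (fun s ↦ V (p s)) (V' (p t)) (Ici a) t)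
    (ha : V (p a) ≤ c) : Tendsto (fun t ↦ V (p t)) atTop (𝓝 (V x₀)) := by
  refine tendsto_order.2 ⟨fun r hr ↦ .of_forall fun t ↦ ?_, fun r hr ↦ ?_⟩
  · exact hr.trans_le (h.apply_le_apply (p t))
  · obtain ⟨s, hs, hsrc⟩ := exists_between (lt_min hr h.lt_level)
    filter_upwards [h.eventually_apply_le hp ha hs (hsrc.le.trans (min_le_right r c))] with t ht
    exact ht.trans_lt (hsrc.trans_le (min_le_left r c))

theorem tendsto (h : IsStrictLyapunovOn V V' x₀ c)
    (hp : ∀ t, a ≤ t → HasDerivWithinAt (fun s ↦ V (p s)) (V' (p t)) (Ici a) t)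
    (ha : V (p a) ≤ c) : Tendsto p atTop (𝓝 x₀) :=
  tendsto_nhds_of_tendsto_of_isCompact_sublevel h.isCompact_sublevel h.continuous.continuousOn
    h.lt_of_ne (h.eventually_apply_le hp ha h.lt_level le_rfl) (h.tendsto_apply hp ha)

end IsStrictLyapunovOn

end Lyapunov

section QuadraticForms

variable {E : Type*} [NormedAddCommGroup E] [NormedSpace ℝ E] [FiniteDimensional ℝ E]
  {Q : QuadraticForm ℝ E}

theorem continuous_quadraticForm (Q : QuadraticForm ℝ E) : Continuous Q := by
  let B : E →L[ℝ] E →L[ℝ] ℝ := (QuadraticMap.associated Q).toContinuousBilinearMap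
  have hQB (x : E) : Q x = B x x := (QuadraticMap.associated_eq_self_apply ℝ Q x).symm
  simp only [funext hQB]
  fun_prop

theorem exists_pos_mul_norm_sq_le_of_posDef (hQ : Q.PosDef) :
    ∃ m > 0, ∀ x, m * ‖x‖ ^ 2 ≤ Q x := by
  obtain ⟨m, hm, hmQ⟩ := (isCompact_sphere (0 : E) 1).exists_forall_le' (a := 0)
    (continuous_quadraticForm Q).continuousOn fun x hx ↦ hQ x (ne_zero_of_mem_unit_sphere ⟨x, hx⟩)
  refine ⟨m, hm, fun x ↦ ?_⟩
  rcases eq_or_ne x 0 with rfl | hx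
  · simp
  · have hnorm : ‖x‖ ≠ 0 := norm_ne_zero_iff.2 hx
    calc m * ‖x‖ ^ 2 ≤ Q (‖x‖⁻¹ • x) * ‖x‖ ^ 2 := by
          gcongr
          exact hmQ _ (by simp [norm_smul, hnorm])
      _ = Q x := by
          rw [QuadraticMap.map_smul, smul_eq_mul]
          field_simp

theorem isCompact_setOf_quadraticForm_le (hQ : Q.PosDef) (c : ℝ) :
    IsCompact {x | Q x ≤ c} := by
  obtain ⟨m, hm, hmQ⟩ := exists_pos_mul_norm_sq_le_of_posDef hQ
  refine (isCompact_closedBall (0 : E) √(c / m)).of_isClosed_subset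
    (isClosed_le (continuous_quadraticForm Q) continuous_const) fun x hx ↦ ?_
  rw [mem_closedBall_zero_iff]
  exact Real.le_sqrt_of_sq_le ((le_div_iff₀' hm).2 ((hmQ x).trans hx))

end QuadraticForms

section Matrices

variable {n : Type*} [Fintype n]

theorem isCompact_setOf_dotProduct_mulVec_le {P : Matrix n n ℝ} (hP : P.PosDef) (c : ℝ) :
    IsCompact {x | x ⬝ᵥ P *ᵥ x ≤ c} := by
  classical
  have happly (x : n → ℝ) : P.toQuadraticForm' x = x ⬝ᵥ P *ᵥ x := by
    simp [toQuadraticForm', toLinearMap₂'_apply']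
  simpa only [happly] using isCompact_setOf_quadraticForm_le hP.toQuadraticForm' c

theorem hasDerivWithinAt_dotProduct {𝕜 : Type*} [NontriviallyNormedField 𝕜] {u v : 𝕜 → n → 𝕜}
    {u' v' : n → 𝕜} {s : Set 𝕜} {t : 𝕜} (hu : HasDerivWithinAt u u' s t)
    (hv : HasDerivWithinAt v v' s t) :
    HasDerivWithinAt (fun τ ↦ u τ ⬝ᵥ v τ) (u' ⬝ᵥ v t + u t ⬝ᵥ v') s t := by
  simp only [dotProduct, ← Finset.sum_add_distrib]
  exact .fun_sum fun i _ ↦ (hasDerivWithinAt_pi.1 hu i).mul (hasDerivWithinAt_pi.1 hv i)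

theorem hasDerivWithinAt_mulVec {𝕜 m : Type*} [NontriviallyNormedField 𝕜] [Finite m]
    (M : Matrix m n 𝕜) {u : 𝕜 → n → 𝕜} {u' : n → 𝕜} {s : Set 𝕜} {t : 𝕜}
    (hu : HasDerivWithinAt u u' s t) : HasDerivWithinAt (fun τ ↦ M *ᵥ u τ) (M *ᵥ u') s t :=
  hasDerivWithinAt_pi.2 fun i ↦
    .fun_sum fun j _ ↦ (hasDerivWithinAt_pi.1 hu j).const_mul (M i j)

theorem dotProduct_mulVec_comm_of_isSymm {R : Type*} [CommSemiring R] {P : Matrix n n R}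
    (hP : P.IsSymm) (x y : n → R) : x ⬝ᵥ P *ᵥ y = y ⬝ᵥ P *ᵥ x := by
  simpa only [hP.eq] using dotProduct_transpose_mulVec P x y

theorem hasDerivWithinAt_dotProduct_mulVec_self {𝕜 : Type*} [NontriviallyNormedField 𝕜]
    {P : Matrix n n 𝕜} (hP : P.IsSymm) {u : 𝕜 → n → 𝕜} {u' : n → 𝕜} {s : Set 𝕜} {t : 𝕜}
    (hu : HasDerivWithinAt u u' s t) :
    HasDerivWithinAt (fun τ ↦ u τ ⬝ᵥ P *ᵥ u τ) (2 * (u t ⬝ᵥ P *ᵥ u')) s t := by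
  convert hasDerivWithinAt_dotProduct hu (hasDerivWithinAt_mulVec P hu) using 1
  rw [dotProduct_mulVec_comm_of_isSymm hP u', two_mul]

theorem dotProduct_transpose_mul_add_mul_mulVec_self {R : Type*} [CommSemiring R]
    {P : Matrix n n R} (hP : P.IsSymm) (B : Matrix n n R) (x : n → R) :
    x ⬝ᵥ (Bᵀ * P + P * B) *ᵥ x = 2 * (x ⬝ᵥ P *ᵥ (B *ᵥ x)) := by
  have htranspose : x ⬝ᵥ (Bᵀ * P) *ᵥ x = x ⬝ᵥ P *ᵥ (B *ᵥ x) := by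
    rw [← mulVec_mulVec, dotProduct_mulVec, vecMul_transpose,
      dotProduct_mulVec_comm_of_isSymm hP]
  rw [add_mulVec, dotProduct_add, htranspose, ← mulVec_mulVec, two_mul]

theorem dotProduct_mulVec_add_smul_neg_of_posDef_neg {P A : Matrix n n ℝ} {h b x : n → ℝ}
    (hP : P.IsSymm)
    (hneg : (-(Aᵀ * P + P * A + vecMulVec h (b ᵥ* P) + vecMulVec (P *ᵥ b) h)).PosDef)
    (hx : x ≠ 0) : x ⬝ᵥ P *ᵥ (A *ᵥ x + (h ⬝ᵥ x) • b) < 0 := by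
  have hmatrix : Aᵀ * P + P * A + vecMulVec h (b ᵥ* P) + vecMulVec (P *ᵥ b) h
      = (A + vecMulVec b h)ᵀ * P + P * (A + vecMulVec b h) := by
    rw [transpose_add, transpose_vecMulVec, add_mul, mul_add, vecMulVec_mul, mul_vecMulVec]
    abel
  have hpos := hneg.dotProduct_mulVec_pos hx
  rw [hmatrix, star_trivial, neg_mulVec, dotProduct_neg,
    dotProduct_transpose_mul_add_mul_mulVec_self hP, add_mulVec, vecMulVec_mulVec,
    op_smul_eq_smul] at hpos
  linarith

theorem isStrictLyapunovOn_dotProduct_mulVec {P : Matrix n n ℝ} (hP : P.PosDef) {c : ℝ}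
    (hc : 0 < c) {f : (n → ℝ) → n → ℝ} (hf : ContinuousOn f {q | q ⬝ᵥ P *ᵥ q ≤ c})
    (hneg : ∀ q, q ≠ 0 → q ⬝ᵥ P *ᵥ q ≤ c → q ⬝ᵥ P *ᵥ f q < 0) :
    IsStrictLyapunovOn (fun q ↦ q ⬝ᵥ P *ᵥ q) (fun q ↦ 2 * (q ⬝ᵥ P *ᵥ f q)) 0 c where
  continuous := by fun_prop
  continuousOn_deriv := by fun_prop
  isCompact_sublevel := isCompact_setOf_dotProduct_mulVec_le hP c
  lt_level := by simpa using hc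
  lt_of_ne q _ hq := by simpa using hP.dotProduct_mulVec_pos hq
  deriv_neg q hqc hq := by linarith [hneg q hq hqc]

end Matrices

theorem regional_asymptotic_stability_general {n : Type*} [Fintype n] {P : Matrix n n ℝ}
    (hP : P.PosDef) {c : ℝ} (hc : 0 < c) {f : (n → ℝ) → n → ℝ}
    (hf : ContinuousOn f {q | q ⬝ᵥ P *ᵥ q ≤ c})
    (hneg : ∀ q, q ≠ 0 → q ⬝ᵥ P *ᵥ q ≤ c → q ⬝ᵥ P *ᵥ f q < 0) {p : ℝ → n → ℝ}
    (hp : ∀ t, 0 ≤ t → HasDerivWithinAt p (f (p t)) (Ici 0) t) (h0 : p 0 ⬝ᵥ P *ᵥ p 0 ≤ c) :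
    (∀ t, 0 ≤ t → p t ⬝ᵥ P *ᵥ p t ≤ c) ∧ Tendsto p atTop (𝓝 0) := by
  have hV := isStrictLyapunovOn_dotProduct_mulVec hP hc hf hneg
  have hVp (t : ℝ) (ht : 0 ≤ t) := hasDerivWithinAt_dotProduct_mulVec_self
    (isHermitian_iff_isSymm.1 hP.isHermitian) (hp t ht)
  exact ⟨fun t ht ↦ hV.sublevel_forward_invariant hVp hV.lt_level le_rfl h0 ht,
    hV.tendsto hVp h0⟩

/-- Lyapunov convergence argument: if the state-dependent matrix
`A_cᵀ W⁻¹ + W⁻¹ A_c + H̃ᵀ (Ñ q)ᵀ W⁻¹ + W⁻¹ (Ñ q) H̃` is negative definite for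
every `q` in the ellipsoid `{q : qᵀ W⁻¹ q ≤ 1}`, then every solution of
`ṗ = A_c p + (H̃ p)(Ñ p)` starting in the ellipsoid stays in the ellipsoid
and converges to the origin. -/
theorem regional_asymptotic_stability
    (d : ℕ) (hd : 1 ≤ d)
    (W Ac Nt : Matrix (Fin d) (Fin d) ℝ) (Ht : Fin d → ℝ)
    (hW : W.PosDef)
    (hneg : ∀ q : Fin d → ℝ, q ⬝ᵥ W⁻¹.mulVec q ≤ 1 →
      (-(Acᵀ * W⁻¹ + W⁻¹ * Ac
        + Matrix.vecMulVec Ht (Matrix.vecMul (Nt.mulVec q) W⁻¹)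
        + Matrix.vecMulVec (W⁻¹.mulVec (Nt.mulVec q)) Ht)).PosDef)
    (p : ℝ → Fin d → ℝ)
    (hp : ∀ t, 0 ≤ t → HasDerivAt p (Ac.mulVec (p t) + (Ht ⬝ᵥ p t) • Nt.mulVec (p t)) t)
    (h0 : p 0 ⬝ᵥ W⁻¹.mulVec (p 0) ≤ 1) :
    (∀ t, 0 ≤ t → p t ⬝ᵥ W⁻¹.mulVec (p t) ≤ 1) ∧
    Filter.Tendsto p Filter.atTop (nhds 0) :=
  regional_asymptotic_stability_general hW.inv one_pos
    (f := fun q ↦ Ac *ᵥ q + (Ht ⬝ᵥ q) • Nt *ᵥ q) (by fun_prop)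
    (fun q hq hq1 ↦ dotProduct_mulVec_add_smul_neg_of_posDef_neg
      (isHermitian_iff_isSymm.1 hW.inv.isHermitian) (hneg q hq1) hq)
    (fun t ht ↦ (hp t ht).hasDerivWithinAt) h0
end

section
/- (Corollary 1.) Let f, g : ℝⁿ → ℝⁿ and h : ℝⁿ → ℝˡ be smooth, and let ψ₁,…,ψ_M : ℝⁿ → ℝ be continuously differentiable with Ψ(x) = (ψ₁(x),…,ψ_M(x)). Suppose there exist A, N ∈ ℝ^{M×M}, B ∈ ℝ^M, C ∈ ℝ^{l×M} such that for all x ∈ ℝⁿ and all i: ∇ψᵢ(x)·f(x) = (A Ψ(x))ᵢ, ∇ψᵢ(x)·g(x) = Bᵢ + (N Ψ(x))ᵢ, and h(x) = C Ψ(x) (the Koopman bilinear representation of Lemma 1). Let S ∈ ℝ^{r×r}, E ∈ ℝ^{1×r}, and let the controller matrices F, G, H, Γ, a matrix Σ ∈ ℝ^{ν×r}, ε > 0, and symmetric positive definite W ∈ ℝ^{(M+ν)×(M+ν)} satisfy the conditions of Proposition 1: Σ S = F Σ, H Σ + E = 0, and the block matrix [[W A_cᵀ + A_c W + ε Ñ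 W Ñᵀ, W H̃ᵀ],[H̃ W, −ε]] is negative definite, where A_c = [[A + BΓC, BH],[GC, F]], Ñ = [[N,0],[0,0]], H̃ = [ΓC, H]. Then for every differentiable triple (x, ξ, w) : [0,∞) → ℝⁿ × ℝ^ν × ℝ^r satisfying the nonlinear closed loop x' = f(x) + g(x)·(u + v), ξ' = Fξ + G h(x), u = Hξ + Γ h(x), w' = Sw, v = Ew, whose initial condition satisfies (Ψ(x(0)), ξ(0) − Σ w(0))ᵀ W⁻¹ (Ψ(x(0)), ξ(0) − Σ w(0)) ≤ 1, the output is regulated: y(t) = h(x(t)) → 0 as t → ∞. -/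
open Matrix

/-!
Along the closed loop the error `p = (Ψ(x), ξ - Σ w)` obeys the autonomous quadratic equation
`ṗ = A_c p + (H̃ p) Ñ p`: the Koopman identities make `Ψ(x)` bilinear in the total input `u + v`,
and `Σ S = F Σ`, `H Σ + E = 0` (the internal model principle) give `u + v = H̃ p`.

Take `V(p) = pᵀ W⁻¹ p` and `μ = H̃ p`. Testing the matrix inequality on `(W⁻¹ p, μ / ε)` and
absorbing the cubic term of `V̇` by Young's inequality for the `W`-inner product yields
`V̇ + c V ≤ (V - 1) μ² / ε` for some `c > 0`. Hence the ellipsoid `V ≤ 1` is invariant, and inside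
it `V̇ ≤ -c V`, so `p → 0` exponentially and with it `y = C Ψ(x)`.
-/

open Filter Set Topology

section QuadraticForms

theorem exists_pos_mul_le_of_homogeneous {V : Type*} [NormedAddCommGroup V] [NormedSpace ℝ V]
    [ProperSpace V] {q r : V → ℝ} {d : ℕ} (hd : d ≠ 0) (hq : Continuous q) (hr : Continuous r)
    (hq_smul : ∀ (a : ℝ) (v : V), 0 ≤ a → q (a • v) = a ^ d * q v)
    (hr_smul : ∀ (a : ℝ) (v : V), 0 ≤ a → r (a • v) = a ^ d * r v)
    (hq_pos : ∀ v, v ≠ 0 → 0 < q v) :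
    ∃ c : ℝ, 0 < c ∧ ∀ v, c * r v ≤ q v := by
  have q_pos_of_mem_sphere : ∀ u ∈ Metric.sphere (0 : V) 1, 0 < q u := fun u hu =>
    hq_pos u (ne_zero_of_mem_unit_sphere ⟨u, hu⟩)
  obtain ⟨K, hK⟩ := (isCompact_sphere (0 : V) 1).exists_bound_of_continuousOn
    (hr.continuousOn.div hq.continuousOn fun u hu => (q_pos_of_mem_sphere u hu).ne')
  have hK_pos : 0 < max K 1 := lt_max_of_lt_right one_pos
  refine ⟨(max K 1)⁻¹, inv_pos.2 hK_pos, fun v => (inv_mul_le_iff₀ hK_pos).2 ?_⟩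
  rcases eq_or_ne v 0 with rfl | hv
  · have hq_zero : q 0 = 0 := by simpa [hd] using hq_smul 0 0 le_rfl
    have hr_zero : r 0 = 0 := by simpa [hd] using hr_smul 0 0 le_rfl
    simp [hq_zero, hr_zero]
  · obtain ⟨u, hu, hvu⟩ : ∃ u ∈ Metric.sphere (0 : V) 1, ‖v‖ • u = v :=
      ⟨‖v‖⁻¹ • v, by simp [norm_smul, hv], smul_inv_smul₀ (norm_ne_zero_iff.2 hv) v⟩
    have on_sphere : r u ≤ max K 1 * q u := by
      rw [← div_le_iff₀ (q_pos_of_mem_sphere u hu)]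
      exact (le_abs_self _).trans ((hK u hu).trans (le_max_left _ _))
    rw [← hvu, hq_smul _ _ (norm_nonneg v), hr_smul _ _ (norm_nonneg v), mul_left_comm]
    gcongr

variable {ι : Type*} [Fintype ι]

theorem continuous_dotProduct_mulVec_self (Q : Matrix ι ι ℝ) :
    Continuous fun v : ι → ℝ => v ⬝ᵥ Q *ᵥ v :=
  continuous_id.dotProduct (continuous_const.matrix_mulVec continuous_id)

theorem smul_dotProduct_mulVec_smul {R : Type*} [CommSemiring R] (Q : Matrix ι ι R) (a : R)
    (v : ι → R) : (a • v) ⬝ᵥ Q *ᵥ (a • v) = a ^ 2 * (v ⬝ᵥ Q *ᵥ v) := by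
  simp only [mulVec_smul, smul_dotProduct, dotProduct_smul, smul_eq_mul]
  ring

theorem dotProduct_mulVec_comm_of_isSymm_s7 {R : Type*} [CommSemiring R] {Q : Matrix ι ι R}
    (hQ : Q.IsSymm) (u v : ι → R) : u ⬝ᵥ Q *ᵥ v = v ⬝ᵥ Q *ᵥ u := by
  rw [← dotProduct_transpose_mulVec, hQ.eq]

theorem sumElim_dotProduct_fromBlocks_mulVec_sumElim {R m : Type*} [NonUnitalNonAssocSemiring R]
    [Fintype m] (P : Matrix ι ι R) (Q : Matrix ι m R) (Q' : Matrix m ι R) (T : Matrix m m R)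
    (u : ι → R) (v : m → R) :
    Sum.elim u v ⬝ᵥ fromBlocks P Q Q' T *ᵥ Sum.elim u v =
      u ⬝ᵥ P *ᵥ u + u ⬝ᵥ Q *ᵥ v + (v ⬝ᵥ Q' *ᵥ u + v ⬝ᵥ T *ᵥ v) := by
  simp only [fromBlocks_mulVec, Sum.elim_comp_inl, Sum.elim_comp_inr, sumElim_dotProduct_sumElim,
    dotProduct_add]

theorem exists_pos_mul_dotProduct_mulVec_le {Q : Matrix ι ι ℝ} (hQ : Q.PosDef)
    (R : Matrix ι ι ℝ) : ∃ c : ℝ, 0 < c ∧ ∀ v, c * (v ⬝ᵥ R *ᵥ v) ≤ v ⬝ᵥ Q *ᵥ v :=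
  exists_pos_mul_le_of_homogeneous two_ne_zero (continuous_dotProduct_mulVec_self Q)
    (continuous_dotProduct_mulVec_self R) (fun a v _ => smul_dotProduct_mulVec_smul Q a v)
    (fun a v _ => smul_dotProduct_mulVec_smul R a v)
    fun _ hv => by simpa using hQ.dotProduct_mulVec_pos hv

theorem exists_pos_mul_norm_sq_le {Q : Matrix ι ι ℝ} (hQ : Q.PosDef) :
    ∃ c : ℝ, 0 < c ∧ ∀ v, c * ‖v‖ ^ 2 ≤ v ⬝ᵥ Q *ᵥ v :=
  exists_pos_mul_le_of_homogeneous two_ne_zero (continuous_dotProduct_mulVec_self Q)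
    (continuous_norm.pow 2) (fun a v _ => smul_dotProduct_mulVec_smul Q a v)
    (fun a v _ => by rw [norm_smul, mul_pow, Real.norm_eq_abs, sq_abs])
    fun _ hv => by simpa using hQ.dotProduct_mulVec_pos hv

theorem tendsto_zero_of_tendsto_dotProduct_mulVec_self {α : Type*} {l : Filter α}
    {Q : Matrix ι ι ℝ} (hQ : Q.PosDef) {p : α → ι → ℝ}
    (hp : Tendsto (fun t => p t ⬝ᵥ Q *ᵥ p t) l (𝓝 0)) : Tendsto p l (𝓝 0) := by
  obtain ⟨c, hc, hle⟩ := exists_pos_mul_norm_sq_le hQ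
  have norm_le_sqrt (t : α) : ‖p t‖ ≤ √((p t ⬝ᵥ Q *ᵥ p t) / c) :=
    Real.le_sqrt_of_sq_le ((le_div_iff₀' hc).2 (hle (p t)))
  refine squeeze_zero_norm norm_le_sqrt ?_
  simpa using (hp.div_const c).sqrt

theorem two_mul_dotProduct_mulVec_le {Q : Matrix ι ι ℝ} (hQ : Q.PosSemidef) {ε : ℝ} (hε : 0 < ε)
    (u v : ι → ℝ) : 2 * (u ⬝ᵥ Q *ᵥ v) ≤ ε * (u ⬝ᵥ Q *ᵥ u) + (v ⬝ᵥ Q *ᵥ v) / ε := by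
  have square_nonneg : 0 ≤ (ε • u - v) ⬝ᵥ Q *ᵥ (ε • u - v) := by
    simpa using hQ.dotProduct_mulVec_nonneg (ε • u - v)
  simp only [mulVec_sub, mulVec_smul, sub_dotProduct, dotProduct_sub, smul_dotProduct,
    dotProduct_smul, smul_eq_mul,
    dotProduct_mulVec_comm_of_isSymm_s7 (isHermitian_iff_isSymm.1 hQ.isHermitian) v u] at square_nonneg
  rw [← sub_nonneg]
  refine (div_nonneg square_nonneg hε.le).trans_eq ?_
  field_simp
  ring

end QuadraticForms

section Derivatives

variable {𝕜 : Type*} [NontriviallyNormedField 𝕜] {m n : Type*} {s : Set 𝕜} {t : 𝕜}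

theorem hasDerivWithinAt_sumElim {V : Type*} [NormedAddCommGroup V] [NormedSpace 𝕜 V]
    {a : 𝕜 → m → V} {b : 𝕜 → n → V} {a' : m → V} {b' : n → V}
    (ha : HasDerivWithinAt a a' s t) (hb : HasDerivWithinAt b b' s t) :
    HasDerivWithinAt (fun τ => Sum.elim (a τ) (b τ)) (Sum.elim a' b') s t :=
  hasDerivWithinAt_pi.2 <| Sum.rec (hasDerivWithinAt_pi.1 ha) (hasDerivWithinAt_pi.1 hb)

variable [Fintype n]

theorem hasDerivWithinAt_dotProduct_s7 {a b : 𝕜 → n → 𝕜} {a' b' : n → 𝕜}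
    (ha : HasDerivWithinAt a a' s t) (hb : HasDerivWithinAt b b' s t) :
    HasDerivWithinAt (fun τ => a τ ⬝ᵥ b τ) (a' ⬝ᵥ b t + a t ⬝ᵥ b') s t := by
  simp only [dotProduct, ← Finset.sum_add_distrib]
  exact HasDerivWithinAt.fun_sum fun i _ =>
    (hasDerivWithinAt_pi.1 ha i).mul (hasDerivWithinAt_pi.1 hb i)

theorem hasDerivWithinAt_mulVec_s7 (Q : Matrix m n 𝕜) {a : 𝕜 → n → 𝕜} {a' : n → 𝕜}
    (ha : HasDerivWithinAt a a' s t) :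
    HasDerivWithinAt (fun τ => Q *ᵥ a τ) (Q *ᵥ a') s t :=
  hasDerivWithinAt_pi.2 fun _ =>
    HasDerivWithinAt.fun_sum fun j _ => (hasDerivWithinAt_pi.1 ha j).const_mul _

theorem hasDerivWithinAt_dotProduct_mulVec_self_s7 {Q : Matrix n n 𝕜} (hQ : Q.IsSymm)
    {a : 𝕜 → n → 𝕜} {a' : n → 𝕜} (ha : HasDerivWithinAt a a' s t) :
    HasDerivWithinAt (fun τ => a τ ⬝ᵥ Q *ᵥ a τ) (2 * (a t ⬝ᵥ Q *ᵥ a')) s t := by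
  refine (hasDerivWithinAt_dotProduct_s7 ha (hasDerivWithinAt_mulVec_s7 Q ha)).congr_deriv ?_
  rw [dotProduct_mulVec_comm_of_isSymm_s7 hQ a', two_mul]

end Derivatives

section DifferentialInequalities

variable {V V' : ℝ → ℝ}

theorem le_of_deriv_neg_of_eq (hV : ∀ t, 0 ≤ t → HasDerivWithinAt V (V' t) (Ici 0) t) {b : ℝ}
    (h0 : V 0 ≤ b) (hb : ∀ t, 0 ≤ t → V t = b → V' t < 0) {t : ℝ} (ht : 0 ≤ t) : V t ≤ b :=
  image_le_of_deriv_right_lt_deriv_boundary (B := fun _ => b) (B' := fun _ => 0)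
    (fun τ hτ => (hV τ hτ.1).continuousWithinAt.mono Icc_subset_Ici_self)
    (fun τ hτ => (hV τ hτ.1).mono (Ici_subset_Ici.2 hτ.1)) h0 (fun τ => hasDerivAt_const τ b)
    (fun τ hτ => hb τ hτ.1) (right_mem_Icc.2 ht)

theorem le_mul_exp_of_deriv_le_mul (hV : ∀ t, 0 ≤ t → HasDerivWithinAt V (V' t) (Ici 0) t) {k : ℝ}
    (hk : ∀ t, 0 ≤ t → V' t ≤ k * V t) {t : ℝ} (ht : 0 ≤ t) : V t ≤ V 0 * Real.exp (k * t) := by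
  have gronwall := le_gronwallBound_of_liminf_deriv_right_le (ε := 0)
    (fun τ hτ => (hV τ hτ.1).continuousWithinAt.mono Icc_subset_Ici_self)
    (fun τ hτ _ => ((hV τ hτ.1).mono (Ici_subset_Ici.2 hτ.1)).liminf_right_slope_le)
    le_rfl (fun τ hτ => by simpa using hk τ hτ.1) t (right_mem_Icc.2 ht)
  rwa [gronwallBound_ε0, sub_zero] at gronwall

theorem tendsto_zero_of_deriv_le_neg_mul (hV : ∀ t, 0 ≤ t → HasDerivWithinAt V (V' t) (Ici 0) t)
    (hV_nonneg : ∀ t, 0 ≤ t → 0 ≤ V t) {c : ℝ} (hc : 0 < c)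
    (hV' : ∀ t, 0 ≤ t → V' t ≤ -c * V t) : Tendsto V atTop (𝓝 0) := by
  have exp_tendsto : Tendsto (fun t => V 0 * Real.exp (-c * t)) atTop (𝓝 0) := by
    simpa using (Real.tendsto_exp_atBot.comp
      (tendsto_id.const_mul_atTop_of_neg (neg_neg_of_pos hc))).const_mul (V 0)
  refine squeeze_zero' ?_ ?_ exp_tendsto
  · filter_upwards [eventually_ge_atTop 0] with t ht using hV_nonneg t ht
  · filter_upwards [eventually_ge_atTop 0] with t ht using le_mul_exp_of_deriv_le_mul hV hV' ht

end DifferentialInequalities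

section BilinearStabilization

variable {ι : Type*} [Fintype ι]

/-- The right-hand side of the bilinear system `ṗ = A p + μ N p` under the linear state feedback
`μ = k ⬝ᵥ p`. -/
def bilinearField (A N : Matrix ι ι ℝ) (k p : ι → ℝ) : ι → ℝ :=
  A *ᵥ p + (k ⬝ᵥ p) • N *ᵥ p

/-- The block matrix `[[W Aᵀ + A W + ε N W Nᵀ, W k], [kᵀ W, -ε]]`, whose negative definiteness
certifies that `bilinearField A N k` contracts the ellipsoid `pᵀ W⁻¹ p ≤ 1`. -/
def stabilizationLMI (A N W : Matrix ι ι ℝ) (k : ι → ℝ) (ε : ℝ) :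
    Matrix (ι ⊕ Fin 1) (ι ⊕ Fin 1) ℝ :=
  fromBlocks (W * Aᵀ + A * W + ε • (N * W * Nᵀ)) (replicateCol (Fin 1) (W *ᵥ k))
    (replicateRow (Fin 1) (k ᵥ* W)) (of fun _ _ => -ε)

variable {A N W : Matrix ι ι ℝ} {k : ι → ℝ} {ε : ℝ}

theorem pos_of_posDef_neg_stabilizationLMI (hLMI : (-stabilizationLMI A N W k ε).PosDef) :
    0 < ε := by
  simpa [stabilizationLMI] using hLMI.diag_pos (i := Sum.inr 0)

theorem dotProduct_stabilizationLMI_mulVec (hW : W.IsSymm) (q : ι → ℝ) (a : ℝ) :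
    Sum.elim q (fun _ => a) ⬝ᵥ stabilizationLMI A N W k ε *ᵥ Sum.elim q (fun _ => a) =
      2 * (q ⬝ᵥ A *ᵥ W *ᵥ q) + ε * (Nᵀ *ᵥ q ⬝ᵥ W *ᵥ Nᵀ *ᵥ q) + 2 * a * (k ⬝ᵥ W *ᵥ q)
        - ε * a ^ 2 := by
  have drift : q ⬝ᵥ (W * Aᵀ) *ᵥ q = q ⬝ᵥ A *ᵥ W *ᵥ q := by
    rw [← mulVec_mulVec, dotProduct_mulVec_comm_of_isSymm_s7 hW, dotProduct_comm,
      dotProduct_transpose_mulVec]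
  have input : q ⬝ᵥ (N * W * Nᵀ) *ᵥ q = Nᵀ *ᵥ q ⬝ᵥ W *ᵥ Nᵀ *ᵥ q := by
    rw [← mulVec_mulVec, ← mulVec_mulVec, dotProduct_mulVec q, ← mulVec_transpose]
  have column : q ⬝ᵥ replicateCol (Fin 1) (W *ᵥ k) *ᵥ (fun _ => a) = a * (k ⬝ᵥ W *ᵥ q) := by
    have column_eq : replicateCol (Fin 1) (W *ᵥ k) *ᵥ (fun _ => a) = a • W *ᵥ k := by
      ext i
      simp [mulVec, dotProduct, mul_comm]
    rw [column_eq, dotProduct_smul, dotProduct_mulVec_comm_of_isSymm_s7 hW, smul_eq_mul]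
  have row : (fun _ => a) ⬝ᵥ replicateRow (Fin 1) (k ᵥ* W) *ᵥ q = a * (k ⬝ᵥ W *ᵥ q) := by
    rw [replicateRow_mulVec_eq_const, ← dotProduct_mulVec]
    simp [dotProduct]
  have corner : (fun _ => a) ⬝ᵥ (of fun _ _ => -ε : Matrix (Fin 1) (Fin 1) ℝ) *ᵥ (fun _ => a) =
      -ε * a ^ 2 := by
    simp only [dotProduct, mulVec, of_apply, Finset.univ_unique, Finset.sum_singleton]
    ring
  rw [stabilizationLMI, sumElim_dotProduct_fromBlocks_mulVec_sumElim, column, row, corner,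
    add_mulVec, add_mulVec, smul_mulVec, dotProduct_add, dotProduct_add, dotProduct_smul, drift,
    input, ← mulVec_mulVec, smul_eq_mul]
  ring

theorem exists_pos_mul_le_of_posDef_neg_stabilizationLMI (hW : W.IsSymm)
    (hLMI : (-stabilizationLMI A N W k ε).PosDef) :
    ∃ c : ℝ, 0 < c ∧ ∀ q : ι → ℝ, c * (q ⬝ᵥ W *ᵥ q) ≤
      -(2 * (q ⬝ᵥ A *ᵥ W *ᵥ q) + ε * (Nᵀ *ᵥ q ⬝ᵥ W *ᵥ Nᵀ *ᵥ q) + (k ⬝ᵥ W *ᵥ q) ^ 2 / ε) := by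
  have hε : 0 < ε := pos_of_posDef_neg_stabilizationLMI hLMI
  obtain ⟨c, hc, hle⟩ := exists_pos_mul_dotProduct_mulVec_le hLMI (fromBlocks W 0 0 0)
  refine ⟨c, hc, fun q => ?_⟩
  set μ := k ⬝ᵥ W *ᵥ q with hμ
  -- `μ / ε` maximizes the quadratic form of the matrix inequality in its last coordinate.
  have tested := hle (Sum.elim q fun _ => μ / ε)
  have last_coordinate : 2 * (μ / ε) * μ - ε * (μ / ε) ^ 2 = μ ^ 2 / ε := by
    field_simp
    ring
  rw [sumElim_dotProduct_fromBlocks_mulVec_sumElim, neg_mulVec, dotProduct_neg,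
    dotProduct_stabilizationLMI_mulVec hW, ← hμ, add_sub_assoc, last_coordinate] at tested
  simpa only [zero_mulVec, dotProduct_zero, add_zero] using tested

theorem exists_pos_dissipation (hW : W.PosDef) (hLMI : (-stabilizationLMI A N W k ε).PosDef) :
    ∃ c : ℝ, 0 < c ∧ ∀ q : ι → ℝ,
      2 * (q ⬝ᵥ bilinearField A N k (W *ᵥ q)) + c * (q ⬝ᵥ W *ᵥ q) ≤
        (q ⬝ᵥ W *ᵥ q - 1) * ((k ⬝ᵥ W *ᵥ q) ^ 2 / ε) := by
  obtain ⟨c, hc, lmi_bound⟩ := exists_pos_mul_le_of_posDef_neg_stabilizationLMI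
    (isHermitian_iff_isSymm.1 hW.isHermitian) hLMI
  refine ⟨c, hc, fun q => ?_⟩
  have young := two_mul_dotProduct_mulVec_le hW.posSemidef
    (pos_of_posDef_neg_stabilizationLMI hLMI) (Nᵀ *ᵥ q) ((k ⬝ᵥ W *ᵥ q) • q)
  rw [smul_dotProduct_mulVec_smul, mulVec_smul, dotProduct_smul, smul_eq_mul] at young
  have field_eq : q ⬝ᵥ bilinearField A N k (W *ᵥ q) =
      q ⬝ᵥ A *ᵥ W *ᵥ q + (k ⬝ᵥ W *ᵥ q) * (Nᵀ *ᵥ q ⬝ᵥ W *ᵥ q) := by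
    rw [bilinearField, dotProduct_add, dotProduct_smul, smul_eq_mul, dotProduct_mulVec q N,
      mulVec_transpose]
  rw [field_eq]
  linear_combination lmi_bound q + young

theorem exists_pos_lyapunov_dissipation [DecidableEq ι] (hW : W.PosDef)
    (hLMI : (-stabilizationLMI A N W k ε).PosDef) :
    ∃ c : ℝ, 0 < c ∧ ∀ p : ι → ℝ,
      2 * (p ⬝ᵥ W⁻¹ *ᵥ bilinearField A N k p) + c * (p ⬝ᵥ W⁻¹ *ᵥ p) ≤
        (p ⬝ᵥ W⁻¹ *ᵥ p - 1) * ((k ⬝ᵥ p) ^ 2 / ε) := by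
  obtain ⟨c, hc, dissipation⟩ := exists_pos_dissipation hW hLMI
  refine ⟨c, hc, fun p => ?_⟩
  have W_mul_inv : W *ᵥ W⁻¹ *ᵥ p = p := by
    rw [mulVec_mulVec, mul_nonsing_inv W hW.det_pos.ne'.isUnit, one_mulVec]
  have at_inv := dissipation (W⁻¹ *ᵥ p)
  rwa [W_mul_inv, dotProduct_comm _ p, dotProduct_comm _ (bilinearField A N k p),
    dotProduct_mulVec_comm_of_isSymm_s7 (isHermitian_iff_isSymm.1 hW.inv.isHermitian)] at at_inv

theorem tendsto_zero_of_hasDerivWithinAt_bilinearField [DecidableEq ι] (hW : W.PosDef)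
    (hLMI : (-stabilizationLMI A N W k ε).PosDef) {p : ℝ → ι → ℝ}
    (hp : ∀ t, 0 ≤ t → HasDerivWithinAt p (bilinearField A N k (p t)) (Ici 0) t)
    (h0 : p 0 ⬝ᵥ W⁻¹ *ᵥ p 0 ≤ 1) : Tendsto p atTop (𝓝 0) := by
  obtain ⟨c, hc, dissipation⟩ := exists_pos_lyapunov_dissipation hW hLMI
  set V : ℝ → ℝ := fun t => p t ⬝ᵥ W⁻¹ *ᵥ p t
  set V' : ℝ → ℝ := fun t => 2 * (p t ⬝ᵥ W⁻¹ *ᵥ bilinearField A N k (p t))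
  have V_deriv (t : ℝ) (ht : 0 ≤ t) : HasDerivWithinAt V (V' t) (Ici 0) t :=
    hasDerivWithinAt_dotProduct_mulVec_self_s7 (isHermitian_iff_isSymm.1 hW.inv.isHermitian) (hp t ht)
  have V_dissipation (t : ℝ) : V' t + c * V t ≤ (V t - 1) * ((k ⬝ᵥ p t) ^ 2 / ε) :=
    dissipation (p t)
  have V_nonneg (t : ℝ) : 0 ≤ V t := by
    simpa using hW.inv.posSemidef.dotProduct_mulVec_nonneg (p t)
  have V_le_one (t : ℝ) (ht : 0 ≤ t) : V t ≤ 1 := by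
    refine le_of_deriv_neg_of_eq V_deriv h0 (fun τ _ hτ => ?_) ht
    have on_boundary := V_dissipation τ
    rw [hτ, sub_self, zero_mul] at on_boundary
    linarith
  have V_deriv_le (t : ℝ) (ht : 0 ≤ t) : V' t ≤ -c * V t := by
    have hε : 0 < ε := pos_of_posDef_neg_stabilizationLMI hLMI
    have feedback_term_nonpos : (V t - 1) * ((k ⬝ᵥ p t) ^ 2 / ε) ≤ 0 :=
      mul_nonpos_of_nonpos_of_nonneg (sub_nonpos.2 (V_le_one t ht)) (by positivity)
    linarith [V_dissipation t]
  exact tendsto_zero_of_tendsto_dotProduct_mulVec_self hW.inv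
    (tendsto_zero_of_deriv_le_neg_mul V_deriv (fun t _ => V_nonneg t) hc V_deriv_le)

end BilinearStabilization

section KoopmanRegulation

variable {X κ ν l r : Type*} [NormedAddCommGroup X] [NormedSpace ℝ X]

/-- `(A, B, N, C)` is a Koopman bilinear representation of `ẋ = f(x) + g(x) s`, `y = h(x)` through
the dictionary `Ψ`: along solutions, `z = Ψ(x)` satisfies `ż = A z + s (B + N z)` and `y = C z`. -/
structure IsKoopmanBilinear [Fintype κ] (f g : X → X) (h : X → l → ℝ) (Ψ : X → κ → ℝ)
    (A : Matrix κ κ ℝ) (B : κ → ℝ) (N : Matrix κ κ ℝ) (C : Matrix l κ ℝ) : Prop where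
  differentiable : Differentiable ℝ Ψ
  fderiv_drift : ∀ x, fderiv ℝ Ψ x (f x) = A *ᵥ Ψ x
  fderiv_input : ∀ x, fderiv ℝ Ψ x (g x) = B + N *ᵥ Ψ x
  output_eq : ∀ x, h x = C *ᵥ Ψ x

/-- The matrix `[[A + B Γ C, B H], [G C, F]]` of the linear part of the lifted closed loop. -/
def closedLoopMatrix [Fintype l] (A : Matrix κ κ ℝ) (B : κ → ℝ) (C : Matrix l κ ℝ)
    (F : Matrix ν ν ℝ) (G : Matrix ν l ℝ) (H : ν → ℝ) (Γ : l → ℝ) : Matrix (κ ⊕ ν) (κ ⊕ ν) ℝ :=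
  fromBlocks (A + vecMulVec B (Γ ᵥ* C)) (vecMulVec B H) (G * C) F

/-- The row `[Γ C, H]` by which the total input `u + v` depends on the regulation error. -/
def closedLoopGain [Fintype l] (C : Matrix l κ ℝ) (H : ν → ℝ) (Γ : l → ℝ) : κ ⊕ ν → ℝ :=
  Sum.elim (Γ ᵥ* C) H

/-- The deviation `(Ψ(x), ξ - Σ w)` of the lifted plant and controller states from the steady state
`(0, Σ w)` on which the output vanishes. -/
def regulationError [Fintype r] (Ψ : X → κ → ℝ) (Sg : Matrix ν r ℝ) (x : X) (ξ : ν → ℝ)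
    (w : r → ℝ) : κ ⊕ ν → ℝ :=
  Sum.elim (Ψ x) (ξ - Sg *ᵥ w)

theorem isKoopmanBilinear_of_components [Fintype κ] {f g : X → X} {h : X → l → ℝ}
    {ψ : κ → X → ℝ} {A : Matrix κ κ ℝ} {B : κ → ℝ} {N : Matrix κ κ ℝ} {C : Matrix l κ ℝ}
    (hψ : ∀ i, Differentiable ℝ (ψ i))
    (h_drift : ∀ x i, fderiv ℝ (ψ i) x (f x) = (A *ᵥ fun k => ψ k x) i)
    (h_input : ∀ x i, fderiv ℝ (ψ i) x (g x) = B i + (N *ᵥ fun k => ψ k x) i)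
    (h_output : ∀ x, h x = C *ᵥ fun k => ψ k x) :
    IsKoopmanBilinear f g h (fun x k => ψ k x) A B N C := by
  have fderiv_apply (x v : X) (i : κ) :
      fderiv ℝ (fun x k => ψ k x) x v i = fderiv ℝ (ψ i) x v := by
    rw [fderiv_pi fun i => hψ i x]
    rfl
  exact ⟨differentiable_pi.2 hψ, fun x => funext fun i => (fderiv_apply ..).trans (h_drift x i),
    fun x => funext fun i => (fderiv_apply ..).trans (h_input x i), h_output⟩

variable [Fintype κ] {f g : X → X} {h : X → l → ℝ} {Ψ : X → κ → ℝ}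
  {A N : Matrix κ κ ℝ} {B : κ → ℝ} {C : Matrix l κ ℝ}

theorem IsKoopmanBilinear.hasDerivWithinAt_lift (hΨ : IsKoopmanBilinear f g h Ψ A B N C)
    {x : ℝ → X} {a t : ℝ} {s : Set ℝ} (hx : HasDerivWithinAt x (f (x t) + a • g (x t)) s t) :
    HasDerivWithinAt (fun τ => Ψ (x τ)) (A *ᵥ Ψ (x t) + a • (B + N *ᵥ Ψ (x t))) s t := by
  refine ((hΨ.differentiable (x t)).hasFDerivAt.comp_hasDerivWithinAt t hx).congr_deriv ?_
  rw [map_add, map_smul, hΨ.fderiv_drift, hΨ.fderiv_input]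

variable [Fintype l] [Fintype ν] {F : Matrix ν ν ℝ} {G : Matrix ν l ℝ} {H : ν → ℝ} {Γ : l → ℝ}

theorem bilinearField_closedLoopMatrix_sumElim (z : κ → ℝ) (e : ν → ℝ) :
    bilinearField (closedLoopMatrix A B C F G H Γ) (fromBlocks N 0 0 0) (closedLoopGain C H Γ)
        (Sum.elim z e) =
      Sum.elim (A *ᵥ z + (closedLoopGain C H Γ ⬝ᵥ Sum.elim z e) • (B + N *ᵥ z))
        (F *ᵥ e + G *ᵥ C *ᵥ z) := by
  rw [bilinearField, closedLoopMatrix, fromBlocks_mulVec, fromBlocks_mulVec, Sum.elim_comp_inl,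
    Sum.elim_comp_inr, closedLoopGain, sumElim_dotProduct_sumElim]
  ext (i | i)
  · simp only [Pi.add_apply, Pi.smul_apply, Sum.elim_inl, add_mulVec, zero_mulVec,
      vecMulVec_mulVec, op_smul_eq_smul, smul_eq_mul, Pi.zero_apply]
    ring
  · simp only [Pi.add_apply, Pi.smul_apply, Sum.elim_inr, zero_mulVec, mulVec_mulVec, smul_zero,
      Pi.zero_apply, add_zero]
    ring

variable [Fintype r] {S : Matrix r r ℝ} {E : r → ℝ} {Sg : Matrix ν r ℝ}

theorem IsKoopmanBilinear.total_input_eq (hΨ : IsKoopmanBilinear f g h Ψ A B N C)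
    (hHE : H ᵥ* Sg + E = 0) (x : X) (ξ : ν → ℝ) (w : r → ℝ) :
    (H ⬝ᵥ ξ + Γ ⬝ᵥ h x) + E ⬝ᵥ w = closedLoopGain C H Γ ⬝ᵥ regulationError Ψ Sg x ξ w := by
  rw [closedLoopGain, regulationError, sumElim_dotProduct_sumElim, hΨ.output_eq,
    eq_neg_of_add_eq_zero_right hHE, dotProduct_sub, dotProduct_mulVec, dotProduct_mulVec,
    neg_dotProduct]
  ring

theorem IsKoopmanBilinear.hasDerivWithinAt_regulationError
    (hΨ : IsKoopmanBilinear f g h Ψ A B N C) (hIM : Sg * S = F * Sg) (hHE : H ᵥ* Sg + E = 0)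
    {x : ℝ → X} {ξ : ℝ → ν → ℝ} {w : ℝ → r → ℝ} {s : Set ℝ} {t : ℝ}
    (hx : HasDerivWithinAt x
      (f (x t) + ((H ⬝ᵥ ξ t + Γ ⬝ᵥ h (x t)) + E ⬝ᵥ w t) • g (x t)) s t)
    (hξ : HasDerivWithinAt ξ (F *ᵥ ξ t + G *ᵥ h (x t)) s t)
    (hw : HasDerivWithinAt w (S *ᵥ w t) s t) :
    HasDerivWithinAt (fun τ => regulationError Ψ Sg (x τ) (ξ τ) (w τ))
      (bilinearField (closedLoopMatrix A B C F G H Γ) (fromBlocks N 0 0 0) (closedLoopGain C H Γ)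
        (regulationError Ψ Sg (x t) (ξ t) (w t))) s t := by
  rw [hΨ.total_input_eq hHE] at hx
  refine (hasDerivWithinAt_sumElim (hΨ.hasDerivWithinAt_lift hx)
    (hξ.sub (hasDerivWithinAt_mulVec_s7 Sg hw))).congr_deriv ?_
  have controller_part : F *ᵥ ξ t + G *ᵥ h (x t) - Sg *ᵥ S *ᵥ w t =
      F *ᵥ (ξ t - Sg *ᵥ w t) + G *ᵥ C *ᵥ Ψ (x t) := by
    rw [hΨ.output_eq, mulVec_sub, mulVec_mulVec (w t) Sg S, hIM, ← mulVec_mulVec (w t) F Sg]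
    abel
  rw [controller_part, regulationError, bilinearField_closedLoopMatrix_sumElim]

theorem nonlinear_output_regulation_via_koopman_general [DecidableEq κ] [DecidableEq ν]
    (hΨ : IsKoopmanBilinear f g h Ψ A B N C) (hIM : Sg * S = F * Sg) (hHE : H ᵥ* Sg + E = 0)
    {ε : ℝ} {W : Matrix (κ ⊕ ν) (κ ⊕ ν) ℝ} (hW : W.PosDef)
    (hLMI : (-stabilizationLMI (closedLoopMatrix A B C F G H Γ) (fromBlocks N 0 0 0) W
      (closedLoopGain C H Γ) ε).PosDef)
    {x : ℝ → X} {ξ : ℝ → ν → ℝ} {w : ℝ → r → ℝ}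
    (hx : ∀ t, 0 ≤ t → HasDerivWithinAt x
      (f (x t) + ((H ⬝ᵥ ξ t + Γ ⬝ᵥ h (x t)) + E ⬝ᵥ w t) • g (x t)) (Ici 0) t)
    (hξ : ∀ t, 0 ≤ t → HasDerivWithinAt ξ (F *ᵥ ξ t + G *ᵥ h (x t)) (Ici 0) t)
    (hw : ∀ t, 0 ≤ t → HasDerivWithinAt w (S *ᵥ w t) (Ici 0) t)
    (h0 : regulationError Ψ Sg (x 0) (ξ 0) (w 0) ⬝ᵥ
      W⁻¹ *ᵥ regulationError Ψ Sg (x 0) (ξ 0) (w 0) ≤ 1) :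
    Tendsto (fun t => h (x t)) atTop (𝓝 0) := by
  have error_tendsto : Tendsto (fun t => regulationError Ψ Sg (x t) (ξ t) (w t)) atTop (𝓝 0) :=
    tendsto_zero_of_hasDerivWithinAt_bilinearField hW hLMI (fun t ht =>
      hΨ.hasDerivWithinAt_regulationError hIM hHE (hx t ht) (hξ t ht) (hw t ht)) h0
  have lift_tendsto : Tendsto (fun t => Ψ (x t)) atTop (𝓝 0) :=
    tendsto_pi_nhds.2 fun i => tendsto_pi_nhds.1 error_tendsto (Sum.inl i)
  have C_continuous : Continuous fun z : κ → ℝ => C *ᵥ z :=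
    continuous_const.matrix_mulVec continuous_id
  simpa [hΨ.output_eq, Function.comp_def] using (C_continuous.tendsto 0).comp lift_tendsto

end KoopmanRegulation

/-- Corollary 1: if the nonlinear system `ẋ = f(x) + g(x)(u+v)`, `y = h(x)`
admits an exact Koopman bilinear representation through the dictionary `Ψ`
with matrices `A, B, N, C`, and the controller matrices satisfy the conditions
of Proposition 1, then the linear dynamic output feedback controller locally
solves the nonlinear output regulation problem: `y(t) = h(x(t)) → 0`. -/
theorem nonlinear_output_regulation_via_koopman
    (n M l ν r : ℕ)
    (f g : (Fin n → ℝ) → (Fin n → ℝ))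
    (h : (Fin n → ℝ) → (Fin l → ℝ))
    (hf : ContDiff ℝ (⊤ : ℕ∞) f) (hg : ContDiff ℝ (⊤ : ℕ∞) g) (hh : ContDiff ℝ (⊤ : ℕ∞) h)
    (ψ : Fin M → (Fin n → ℝ) → ℝ)
    (hψ : ∀ i, ContDiff ℝ 1 (ψ i))
    -- the Koopman bilinear representation of Lemma 1
    (A N : Matrix (Fin M) (Fin M) ℝ) (B : Fin M → ℝ) (C : Matrix (Fin l) (Fin M) ℝ)
    (hrepA : ∀ (x : Fin n → ℝ) (i : Fin M),
      fderiv ℝ (ψ i) x (f x) = A.mulVec (fun k => ψ k x) i)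
    (hrepB : ∀ (x : Fin n → ℝ) (i : Fin M),
      fderiv ℝ (ψ i) x (g x) = B i + N.mulVec (fun k => ψ k x) i)
    (hrepC : ∀ x : Fin n → ℝ, h x = C.mulVec fun k => ψ k x)
    -- exosystem and controller matrices
    (S : Matrix (Fin r) (Fin r) ℝ) (E : Fin r → ℝ)
    (F : Matrix (Fin ν) (Fin ν) ℝ) (G : Matrix (Fin ν) (Fin l) ℝ)
    (H : Fin ν → ℝ) (Γ : Fin l → ℝ)
    (Ac : Matrix (Fin M ⊕ Fin ν) (Fin M ⊕ Fin ν) ℝ)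
    (hAc : Ac = Matrix.fromBlocks
      (A + Matrix.vecMulVec B (Matrix.vecMul Γ C)) (Matrix.vecMulVec B H) (G * C) F)
    (Nt : Matrix (Fin M ⊕ Fin ν) (Fin M ⊕ Fin ν) ℝ)
    (hNt : Nt = Matrix.fromBlocks N 0 0 0)
    (Ht : Fin M ⊕ Fin ν → ℝ)
    (hHt : Ht = Sum.elim (Matrix.vecMul Γ C) H)
    -- conditions of Proposition 1
    (Sg : Matrix (Fin ν) (Fin r) ℝ)
    (hIM : Sg * S = F * Sg)
    (hHE : Matrix.vecMul H Sg + E = 0)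
    (ε : ℝ) (hε : 0 < ε)
    (W : Matrix (Fin M ⊕ Fin ν) (Fin M ⊕ Fin ν) ℝ) (hW : W.PosDef)
    (hLMI : (-(Matrix.fromBlocks (W * Acᵀ + Ac * W + ε • (Nt * W * Ntᵀ))
        (Matrix.of fun i (_ : Fin 1) => W.mulVec Ht i)
        (Matrix.of fun (_ : Fin 1) j => Matrix.vecMul Ht W j)
        (Matrix.of fun (_ : Fin 1) (_ : Fin 1) => -ε))).PosDef)
    -- closed-loop nonlinear trajectory on [0, ∞)
    (x : ℝ → Fin n → ℝ) (ξ : ℝ → Fin ν → ℝ) (w : ℝ → Fin r → ℝ)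
    (hx : ∀ t, 0 ≤ t → HasDerivAt x (f (x t)
      + ((H ⬝ᵥ ξ t + Γ ⬝ᵥ h (x t)) + E ⬝ᵥ w t) • g (x t)) t)
    (hξ : ∀ t, 0 ≤ t → HasDerivAt ξ (F.mulVec (ξ t) + G.mulVec (h (x t))) t)
    (hw : ∀ t, 0 ≤ t → HasDerivAt w (S.mulVec (w t)) t)
    -- initial condition in the ellipsoid
    (h0 : Sum.elim (fun k => ψ k (x 0)) (ξ 0 - Sg.mulVec (w 0)) ⬝ᵥ
      W⁻¹.mulVec (Sum.elim (fun k => ψ k (x 0)) (ξ 0 - Sg.mulVec (w 0))) ≤ 1) :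
    Filter.Tendsto (fun t => h (x t)) Filter.atTop (nhds 0) := by
  subst hAc hNt hHt
  exact nonlinear_output_regulation_via_koopman_general
    (isKoopmanBilinear_of_components (fun i => (hψ i).differentiable one_ne_zero)
      hrepA hrepB hrepC)
    hIM hHE hW hLMI (fun t ht => (hx t ht).hasDerivWithinAt)
    (fun t ht => (hξ t ht).hasDerivWithinAt) (fun t ht => (hw t ht).hasDerivWithinAt) h0
end
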